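/- arXiv:math/0101185 — 6 statements merged into one kernel-verified Lean document; each statement's English description precedes it below -/
import Mathlib

section
/- The coefficient of X¹ in the characteristic polynomial det(X·I − M) of the matrix M defined in the context equals R⁴·a²·(ax² + at²) + R²·bx²·(a² + aθ²). -/
/-- The coordinate matrix of the 2-form ω = d(A·η + B·dt) at a point of the plug,
with rows/columns indexed by (θ₁, θ₂, θ₃, x, t); here a = A, aθ = ∂A/∂θ₃,
a_x = ∂A/∂x, a_t = ∂A/∂t, b_x = ∂B/∂x. -/
noncomputable def plugMatrix (R θ₃ a aθ a_x a_t b_x : ℝ) : Matrix (Fin 5) (Fin 5) ℝ :=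
  !![0, 0, -(R * Real.cos θ₃ * aθ - R * a * Real.sin θ₃), -(R * Real.cos θ₃ * a_x),
       -(R * Real.cos θ₃ * a_t);
     0, 0, -(R * Real.sin θ₃ * aθ + R * a * Real.cos θ₃), -(R * Real.sin θ₃ * a_x),
       -(R * Real.sin θ₃ * a_t);
     R * Real.cos θ₃ * aθ - R * a * Real.sin θ₃, R * Real.sin θ₃ * aθ + R * a * Real.cos θ₃,
       0, 0, 0;
     R * Real.cos θ₃ * a_x, R * Real.sin θ₃ * a_x, 0, 0, b_x;
     R * Real.cos θ₃ * a_t, R * Real.sin θ₃ * a_t, 0, -b_x, 0]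

/-!
Up to sign, the `X`-coefficient of the characteristic polynomial of a matrix is the sum of its
principal minors of corank one. For an alternating `5 × 5` matrix these minors are determinants of
alternating `4 × 4` matrices, hence squares of Pfaffians. For the plug matrix, the Pfaffians
obtained by deleting `θ₁` and `θ₂` are, up to sign, the coordinates of `R * b_x * (a, aθ)` rotated
by `-θ₃`, so their squares add up to `R ^ 2 * b_x ^ 2 * (a ^ 2 + aθ ^ 2)`; deleting `θ₃`, `x` and
`t` gives `0`, `R ^ 2 * a * a_t` and `R ^ 2 * a * a_x`.
-/

open Matrix

/-- A square matrix is alternating if it is skew-symmetric with zero diagonal, i.e. if its bilinear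
form `(v, w) ↦ vᵀ M w` is alternating; the diagonal condition is separate because skew-symmetry
does not imply it when `2` is a zero divisor. -/
structure IsAlternatingMatrix {n R : Type*} [Zero R] [Neg R] (M : Matrix n n R) : Prop where
  apply_self : ∀ i, M i i = 0
  apply_swap : ∀ i j, M j i = -M i j

theorem IsAlternatingMatrix.submatrix {m n R : Type*} [Zero R] [Neg R] {M : Matrix n n R}
    (hM : IsAlternatingMatrix M) (f : m → n) : IsAlternatingMatrix (M.submatrix f f) where
  apply_self i := hM.apply_self (f i)
  apply_swap i j := hM.apply_swap (f i) (f j)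

section CommRing

variable {R : Type*} [CommRing R]

/-- The Pfaffian of an alternating `4 × 4` matrix, as a polynomial in the entries above the
diagonal; it is defined for every matrix, but is meaningful only for alternating ones. -/
def pfaffianFinFour (M : Matrix (Fin 4) (Fin 4) R) : R :=
  M 0 1 * M 2 3 - M 0 2 * M 1 3 + M 0 3 * M 1 2

theorem IsAlternatingMatrix.det_fin_four {M : Matrix (Fin 4) (Fin 4) R}
    (hM : IsAlternatingMatrix M) : M.det = pfaffianFinFour M ^ 2 := by
  rw [det_succ_row_zero, Fin.sum_univ_four, pfaffianFinFour]
  simp only [det_fin_three, submatrix_apply, Fin.succAbove, Fin.isValue, Fin.reduceCastSucc,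
    Fin.reduceSucc, Fin.reduceLT, ↓reduceIte, hM.apply_self, hM.apply_swap 0 1, hM.apply_swap 0 2,
    hM.apply_swap 0 3, hM.apply_swap 1 2, hM.apply_swap 1 3, hM.apply_swap 2 3,
    Fin.coe_ofNat_eq_mod]
  ring

theorem det_submatrix_compl_singleton {n : ℕ} (M : Matrix (Fin (n + 1)) (Fin (n + 1)) R)
    (i : Fin (n + 1)) :
    (M.submatrix (Subtype.val : ({i}ᶜ : Finset (Fin (n + 1))) → Fin (n + 1)) Subtype.val).det =
      (M.submatrix i.succAbove i.succAbove).det := by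
  let e : Fin n ≃ ({i}ᶜ : Finset (Fin (n + 1))) :=
    (finSuccAboveEquiv i).trans (Equiv.subtypeEquivRight fun j => by simp)
  rw [← det_submatrix_equiv_self e, submatrix_submatrix]
  rfl

theorem charpoly_coeff_one_eq_sum_det_succAbove {n : ℕ}
    (M : Matrix (Fin (n + 1)) (Fin (n + 1)) R) :
    M.charpoly.coeff 1 =
      (-1) ^ n * ∑ i : Fin (n + 1), (M.submatrix i.succAbove i.succAbove).det := by
  have hminors := charpoly_coeff_eq_sum_minors M n (by simp)
  rw [Fintype.card_fin, Nat.add_sub_cancel_left] at hminors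
  rw [hminors]
  congr 1
  symm
  refine Finset.sum_bij (fun i _ => ({i}ᶜ : Finset (Fin (n + 1))))
    (fun i _ => ?_) (fun i _ j _ hij => ?_) (fun s hs => ?_)
    (fun i _ => (det_submatrix_compl_singleton M i).symm)
  · simp [Finset.mem_powersetCard, Finset.card_compl]
  · exact Finset.singleton_injective (compl_injective hij)
  · have hcard : sᶜ.card = 1 := by
      rw [Finset.card_compl, (Finset.mem_powersetCard.mp hs).2, Fintype.card_fin,
        Nat.add_sub_cancel_left]
    obtain ⟨i, hi⟩ := Finset.card_eq_one.mp hcard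
    exact ⟨i, Finset.mem_univ i, by rw [← hi, compl_compl]⟩

theorem IsAlternatingMatrix.charpoly_coeff_one_fin_five {M : Matrix (Fin 5) (Fin 5) R}
    (hM : IsAlternatingMatrix M) :
    M.charpoly.coeff 1 =
      ∑ i : Fin 5, pfaffianFinFour (M.submatrix i.succAbove i.succAbove) ^ 2 := by
  rw [charpoly_coeff_one_eq_sum_det_succAbove, Even.neg_one_pow (by decide), one_mul]
  exact Finset.sum_congr rfl fun i _ => (hM.submatrix i.succAbove).det_fin_four

end CommRing

section Plug

variable (R θ₃ a aθ a_x a_t b_x : ℝ)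

theorem isAlternatingMatrix_plugMatrix :
    IsAlternatingMatrix (plugMatrix R θ₃ a aθ a_x a_t b_x) where
  apply_self i := by fin_cases i <;> rfl
  apply_swap i j := by fin_cases i <;> fin_cases j <;> simp [plugMatrix]

theorem pfaffianFinFour_plugMatrix_submatrix_succAbove (i : Fin 5) :
    pfaffianFinFour ((plugMatrix R θ₃ a aθ a_x a_t b_x).submatrix i.succAbove i.succAbove) =
      ![-(R * b_x * (a * Real.cos θ₃ + aθ * Real.sin θ₃)),
        R * b_x * (a * Real.sin θ₃ - aθ * Real.cos θ₃),
        0,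
        R ^ 2 * a * a_t,
        R ^ 2 * a * a_x] i := by
  have hθ := Real.cos_sq_add_sin_sq θ₃
  fin_cases i <;>
    simp only [pfaffianFinFour, plugMatrix, submatrix_apply, Fin.succAbove, of_apply, cons_val,
      cons_val', cons_val_fin_one, Fin.isValue, Fin.reduceFinMk, Fin.reduceCastSucc,
      Fin.reduceSucc, Fin.reduceLT, Nat.reduceAdd, ↓reduceIte, Fin.zero_eta, Fin.mk_one]
  · ring
  · ring
  · ring
  · linear_combination R ^ 2 * a * a_t * hθ
  · linear_combination R ^ 2 * a * a_x * hθ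

end Plug

/-- The coefficient of X¹ in the characteristic polynomial of the plug matrix equals
R⁴·a²·(a_x² + a_t²) + R²·b_x²·(a² + aθ²). -/
theorem stmt_2 (R θ₃ a aθ a_x a_t b_x : ℝ) :
    (plugMatrix R θ₃ a aθ a_x a_t b_x).charpoly.coeff 1
      = R ^ 4 * a ^ 2 * (a_x ^ 2 + a_t ^ 2) + R ^ 2 * b_x ^ 2 * (a ^ 2 + aθ ^ 2) := by
  rw [(isAlternatingMatrix_plugMatrix R θ₃ a aθ a_x a_t b_x).charpoly_coeff_one_fin_five]
  simp only [pfaffianFinFour_plugMatrix_submatrix_succAbove, Fin.sum_univ_five]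
  simp only [Fin.isValue, cons_val, cons_val_zero, cons_val_one]
  linear_combination R ^ 2 * b_x ^ 2 * (a ^ 2 + aθ ^ 2) * Real.cos_sq_add_sin_sq θ₃
end

section
/- If R ≠ 0, a ≠ 0, and either (ax, at) ≠ (0, 0) or bx ≠ 0, then the matrix M defined in the context has one-dimensional kernel (equivalently, rank 4). -/
/-!
Removing one coordinate `i` from a skew-symmetric `5 × 5` matrix leaves a skew-symmetric `4 × 4`
matrix whose determinant is the square of its Pfaffian; up to sign and a factor `2`, the five
Pfaffians are the coefficients of `ω ∧ ω`. If one of them is nonzero the rank is at least `4`, and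
it is not `5` because a skew-symmetric determinant of odd order vanishes.

For the plug matrix, removing `t` or `x` gives the Pfaffians `R² a a_x` and `R² a a_t`, while
removing `θ₁` or `θ₂` gives, up to sign, `R b_x` times the two coordinates of `(a, aθ)` in an
orthonormal frame rotated by `θ₃`.
-/

open Matrix Module

section SkewSymmetric

variable {m n R K : Type*} [Fintype m] [DecidableEq m] [Fintype n] [DecidableEq n]

theorem diag_eq_zero_of_transpose_eq_neg {ι : Type*} [Ring R] [IsDomain R]
    (hR : ringChar R ≠ 2) {A : Matrix ι ι R} (hA : Aᵀ = -A) (i : ι) : A i i = 0 :=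
  (Ring.eq_self_iff_eq_zero_of_char_ne_two hR).mp (congrFun₂ hA i i).symm

theorem det_eq_zero_of_transpose_eq_neg_of_odd [CommRing R] [IsDomain R]
    (hR : ringChar R ≠ 2) {A : Matrix n n R} (hA : Aᵀ = -A) (hn : Odd (Fintype.card n)) :
    A.det = 0 := by
  refine (Ring.eq_self_iff_eq_zero_of_char_ne_two hR).mp ?_
  calc
    -A.det = (-A).det := by rw [det_neg, hn.neg_one_pow, neg_one_mul]
    _ = A.det := by rw [← hA, det_transpose]

theorem finrank_ker_mulVecLin_eq_one_of_det_submatrix_ne_zero [Field K] {A : Matrix n n K}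
    (hcard : Fintype.card n = Fintype.card m + 1) (hdet : A.det = 0) {r c : m → n}
    (hminor : (A.submatrix r c).det ≠ 0) : finrank K (LinearMap.ker A.mulVecLin) = 1 := by
  have hrank : Fintype.card m ≤ finrank K (LinearMap.range A.mulVecLin) :=
    (rank_of_det_ne_zero hminor).symm.trans_le (rank_submatrix_le A r c)
  have hker : 0 < finrank K (LinearMap.ker A.mulVecLin) := by
    obtain ⟨v, hv, hAv⟩ := exists_mulVec_eq_zero_iff.mpr hdet
    exact finrank_pos_iff_exists_ne_zero.mpr ⟨⟨v, hAv⟩, fun h => hv (congrArg Subtype.val h)⟩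
  have hsum := A.mulVecLin.finrank_range_add_finrank_ker
  rw [finrank_fintype_fun_eq_card] at hsum
  omega

/-- The Pfaffian of a skew-symmetric `4 × 4` matrix, as a polynomial in the entries above the
diagonal. The other entries are ignored, so the value is meaningful only when `A` is
skew-symmetric. -/
def pfaffianFour [CommRing R] (A : Matrix (Fin 4) (Fin 4) R) : R :=
  A 0 1 * A 2 3 - A 0 2 * A 1 3 + A 0 3 * A 1 2

theorem det_eq_pfaffianFour_sq [CommRing R] {A : Matrix (Fin 4) (Fin 4) R} (hA : Aᵀ = -A)
    (hdiag : ∀ i, A i i = 0) : A.det = pfaffianFour A ^ 2 := by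
  have hlower (i j : Fin 4) : A j i = -A i j := congrFun₂ hA i j
  rw [det_succ_row_zero, Fin.sum_univ_four]
  simp only [det_fin_three, submatrix_apply, Fin.succAbove, Fin.isValue, Fin.reduceSucc,
    Fin.succ_zero_eq_one, Fin.succ_one_eq_two, Fin.castSucc_zero, Fin.castSucc_one,
    Fin.reduceCastSucc, Fin.reduceLT, ↓reduceIte, Fin.coe_ofNat_eq_mod,
    hdiag, hlower 0 1, hlower 0 2, hlower 0 3, hlower 1 2, hlower 1 3, hlower 2 3, pfaffianFour]
  ring

theorem finrank_ker_mulVecLin_eq_one_of_pfaffianFour_ne_zero [Field K] (hK : ringChar K ≠ 2)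
    {A : Matrix (Fin 5) (Fin 5) K} (hA : Aᵀ = -A) {i : Fin 5}
    (hi : pfaffianFour (A.submatrix i.succAbove i.succAbove) ≠ 0) :
    finrank K (LinearMap.ker A.mulVecLin) = 1 := by
  have hminor : (A.submatrix i.succAbove i.succAbove)ᵀ = -A.submatrix i.succAbove i.succAbove := by
    rw [transpose_submatrix, hA, submatrix_neg]; rfl
  refine finrank_ker_mulVecLin_eq_one_of_det_submatrix_ne_zero (by simp)
    (det_eq_zero_of_transpose_eq_neg_of_odd hK hA (by decide))
    (r := i.succAbove) (c := i.succAbove) ?_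
  rw [det_eq_pfaffianFour_sq hminor (diag_eq_zero_of_transpose_eq_neg hK hminor)]
  exact pow_ne_zero 2 hi

end SkewSymmetric

section PlugMatrix

variable (R θ₃ a aθ a_x a_t b_x : ℝ)

/-- The Pfaffian of the plug matrix with the `i`-th row and column removed, i.e. up to sign and a
factor `2` the coefficient of `ω ∧ ω` on the four remaining coordinates. -/
noncomputable def plugPfaffian (i : Fin 5) : ℝ :=
  pfaffianFour ((plugMatrix R θ₃ a aθ a_x a_t b_x).submatrix i.succAbove i.succAbove)

theorem plugMatrix_transpose :
    (plugMatrix R θ₃ a aθ a_x a_t b_x)ᵀ = -plugMatrix R θ₃ a aθ a_x a_t b_x := by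
  ext i j
  fin_cases i <;> fin_cases j <;> simp [plugMatrix]

theorem plugPfaffian_zero :
    plugPfaffian R θ₃ a aθ a_x a_t b_x 0 =
      -(R * b_x * (a * Real.cos θ₃ + aθ * Real.sin θ₃)) := calc
  _ = -(R * Real.sin θ₃ * aθ + R * a * Real.cos θ₃) * b_x - -(R * Real.sin θ₃ * a_x) * 0
      + -(R * Real.sin θ₃ * a_t) * 0 := rfl
  _ = _ := by ring

theorem plugPfaffian_one :
    plugPfaffian R θ₃ a aθ a_x a_t b_x 1 =
      R * b_x * (a * Real.sin θ₃ - aθ * Real.cos θ₃) := calc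
  _ = -(R * Real.cos θ₃ * aθ - R * a * Real.sin θ₃) * b_x - -(R * Real.cos θ₃ * a_x) * 0
      + -(R * Real.cos θ₃ * a_t) * 0 := rfl
  _ = _ := by ring

theorem plugPfaffian_three : plugPfaffian R θ₃ a aθ a_x a_t b_x 3 = R ^ 2 * a * a_t := calc
  _ = 0 * 0 - -(R * Real.cos θ₃ * aθ - R * a * Real.sin θ₃) * -(R * Real.sin θ₃ * a_t)
      + -(R * Real.cos θ₃ * a_t) * -(R * Real.sin θ₃ * aθ + R * a * Real.cos θ₃) := rfl
  _ = R ^ 2 * a * a_t * (Real.sin θ₃ ^ 2 + Real.cos θ₃ ^ 2) := by ring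
  _ = R ^ 2 * a * a_t := by rw [Real.sin_sq_add_cos_sq, mul_one]

theorem plugPfaffian_four : plugPfaffian R θ₃ a aθ a_x a_t b_x 4 = R ^ 2 * a * a_x := calc
  _ = 0 * 0 - -(R * Real.cos θ₃ * aθ - R * a * Real.sin θ₃) * -(R * Real.sin θ₃ * a_x)
      + -(R * Real.cos θ₃ * a_x) * -(R * Real.sin θ₃ * aθ + R * a * Real.cos θ₃) := rfl
  _ = R ^ 2 * a * a_x * (Real.sin θ₃ ^ 2 + Real.cos θ₃ ^ 2) := by ring
  _ = R ^ 2 * a * a_x := by rw [Real.sin_sq_add_cos_sq, mul_one]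

variable {R a aθ a_x a_t b_x}

theorem rotation_ne_zero (h : (a, aθ) ≠ (0, 0)) :
    a * Real.cos θ₃ + aθ * Real.sin θ₃ ≠ 0 ∨ a * Real.sin θ₃ - aθ * Real.cos θ₃ ≠ 0 := by
  contrapose! h
  obtain ⟨hcos, hsin⟩ := h
  have hcs := Real.sin_sq_add_cos_sq θ₃
  refine Prod.ext ?_ ?_
  · linear_combination Real.cos θ₃ * hcos + Real.sin θ₃ * hsin - a * hcs
  · linear_combination Real.sin θ₃ * hcos - Real.cos θ₃ * hsin - aθ * hcs

theorem exists_plugPfaffian_ne_zero (hR : R ≠ 0)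
    (h : a ≠ 0 ∧ (a_x, a_t) ≠ (0, 0) ∨ (a, aθ) ≠ (0, 0) ∧ b_x ≠ 0) :
    ∃ i, plugPfaffian R θ₃ a aθ a_x a_t b_x i ≠ 0 := by
  rcases h with ⟨ha, hgrad⟩ | ⟨haθ, hb⟩
  · rw [Ne, Prod.mk.injEq, not_and_or] at hgrad
    rcases hgrad with hx | ht
    · exact ⟨4, by rw [plugPfaffian_four]; positivity⟩
    · exact ⟨3, by rw [plugPfaffian_three]; positivity⟩
  · rcases rotation_ne_zero θ₃ haθ with hcos | hsin
    · exact ⟨0, by rw [plugPfaffian_zero]; exact neg_ne_zero.mpr (by positivity)⟩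
    · exact ⟨1, by rw [plugPfaffian_one]; positivity⟩

end PlugMatrix

theorem stmt_3_general (R θ₃ a aθ a_x a_t b_x : ℝ) (hR : R ≠ 0)
    (h : a ≠ 0 ∧ (a_x, a_t) ≠ (0, 0) ∨ (a, aθ) ≠ (0, 0) ∧ b_x ≠ 0) :
    finrank ℝ (LinearMap.ker (plugMatrix R θ₃ a aθ a_x a_t b_x).mulVecLin) = 1 := by
  obtain ⟨i, hi⟩ := exists_plugPfaffian_ne_zero θ₃ hR h
  exact finrank_ker_mulVecLin_eq_one_of_pfaffianFour_ne_zero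
    (by simp [ringChar.eq_zero]) (plugMatrix_transpose ..) hi

/-- If R ≠ 0, a ≠ 0, and either (a_x, a_t) ≠ (0,0) or b_x ≠ 0, then the plug matrix has
one-dimensional kernel. -/
theorem stmt_3 (R θ₃ a aθ a_x a_t b_x : ℝ) (hR : R ≠ 0) (ha : a ≠ 0)
    (h : (a_x, a_t) ≠ ((0 : ℝ), (0 : ℝ)) ∨ b_x ≠ 0) :
    Module.finrank ℝ (LinearMap.ker (plugMatrix R θ₃ a aθ a_x a_t b_x).mulVecLin) = 1 :=
  stmt_3_general R θ₃ a aθ a_x a_t b_x hR <|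
    h.imp (fun hgrad => ⟨ha, hgrad⟩) (fun hb => ⟨fun h0 => ha (congrArg Prod.fst h0), hb⟩)
end

section
/- If R ≠ 0, a ≠ 0, ax ≠ 0, at = 0 and bx = 0, then the kernel of the matrix M defined in the context is exactly the line spanned by the fifth standard basis vector e₅ = (0,0,0,0,1). -/
/-! In the splitting (θ₁, θ₂ | θ₃, x) of the first four coordinates the plug matrix has the block
form [[0, -Kᵀ], [K, 0]] with det K = -R² a a_x, and a_t, b_x occur only in the row and the column
of t. Hence it has rank at least four where R, a and a_x do not vanish, and its kernel is the line
through any nonzero vector it contains. -/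

open Module in
theorem ker_eq_span_singleton_of_finrank_le {K V W : Type*} [DivisionRing K] [AddCommGroup V]
    [Module K V] [FiniteDimensional K V] [AddCommGroup W] [Module K W] {f : V →ₗ[K] W}
    (hf : finrank K V ≤ finrank K (LinearMap.range f) + 1) {w : V} (hw : f w = 0) (hw₀ : w ≠ 0) :
    LinearMap.ker f = Submodule.span K {w} := by
  have hle : Submodule.span K {w} ≤ LinearMap.ker f :=
    (Submodule.span_singleton_le_iff_mem w _).2 hw
  refine (Submodule.eq_of_le_of_finrank_le hle ?_).symm
  have hrank_nullity := f.finrank_range_add_finrank_ker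
  rw [finrank_span_singleton hw₀]
  lia

/-- The block `K` of `plugMatrix` with rows θ₃, x and columns θ₁, θ₂: the coefficients of
dθ₃ ∧ dθ₁, dθ₃ ∧ dθ₂, dx ∧ dθ₁ and dx ∧ dθ₂ in d(A·η), in the coordinates where
η = R (cos θ₃ dθ₁ + sin θ₃ dθ₂). -/
noncomputable def plugBlock (R θ₃ a aθ a_x : ℝ) : Matrix (Fin 2) (Fin 2) ℝ :=
  !![R * Real.cos θ₃ * aθ - R * a * Real.sin θ₃, R * Real.sin θ₃ * aθ + R * a * Real.cos θ₃;
     R * Real.cos θ₃ * a_x, R * Real.sin θ₃ * a_x]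

theorem det_plugBlock (R θ₃ a aθ a_x : ℝ) :
    (plugBlock R θ₃ a aθ a_x).det = -(R ^ 2 * a * a_x) := by
  rw [plugBlock, Matrix.det_fin_two_of]
  linear_combination -(R ^ 2 * a * a_x) * Real.sin_sq_add_cos_sq θ₃

theorem plugMatrix_submatrix (R θ₃ a aθ a_x a_t b_x : ℝ) :
    (plugMatrix R θ₃ a aθ a_x a_t b_x).submatrix
        (Sum.elim ![0, 1] ![2, 3]) (Sum.elim ![2, 3] ![0, 1]) =
      Matrix.fromBlocks (-(plugBlock R θ₃ a aθ a_x).transpose) 0 0 (plugBlock R θ₃ a aθ a_x) := by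
  ext (i | i) (j | j) <;> fin_cases i <;> fin_cases j <;> rfl

theorem four_le_rank_plugMatrix {R a a_x : ℝ} (hR : R ≠ 0) (ha : a ≠ 0) (hax : a_x ≠ 0)
    (θ₃ aθ a_t b_x : ℝ) : 4 ≤ (plugMatrix R θ₃ a aθ a_x a_t b_x).rank := by
  have hK : (plugBlock R θ₃ a aθ a_x).det ≠ 0 := by
    rw [det_plugBlock]
    exact neg_ne_zero.2 (by positivity)
  have hminor : ((plugMatrix R θ₃ a aθ a_x a_t b_x).submatrix
      (Sum.elim ![0, 1] ![2, 3]) (Sum.elim ![2, 3] ![0, 1])).det ≠ 0 := by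
    rw [plugMatrix_submatrix, Matrix.det_fromBlocks_zero₂₁, Matrix.det_neg, Matrix.det_transpose]
    simpa using hK
  calc 4 = _ := (Matrix.rank_of_det_ne_zero hminor).symm
    _ ≤ _ := Matrix.rank_submatrix_le _ _ _

/-- The direction of the characteristic foliation ker ω, normalized to have t-coordinate 1. It is
meant for nonzero `R`, `a` and `a_x`, which occur in denominators. -/
noncomputable def plugKernelVec (R θ₃ a aθ a_x a_t b_x : ℝ) : Fin 5 → ℝ :=
  ![-((a * Real.cos θ₃ + aθ * Real.sin θ₃) * b_x / (R * a * a_x)),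
    (aθ * Real.cos θ₃ - a * Real.sin θ₃) * b_x / (R * a * a_x), 0, -(a_t / a_x), 1]

theorem plugMatrix_mulVec_plugKernelVec {R a a_x : ℝ} (hR : R ≠ 0) (ha : a ≠ 0) (hax : a_x ≠ 0)
    (θ₃ aθ a_t b_x : ℝ) :
    (plugMatrix R θ₃ a aθ a_x a_t b_x).mulVec (plugKernelVec R θ₃ a aθ a_x a_t b_x) = 0 := by
  have hsc := Real.sin_sq_add_cos_sq θ₃
  ext i
  fin_cases i <;>
    simp [plugMatrix, plugKernelVec, Matrix.mulVec, dotProduct, Fin.sum_univ_five] <;>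
    field_simp
  · ring
  · ring
  · ring
  · linear_combination -(a * b_x) * hsc
  · linear_combination -(a * a_t * b_x) * hsc

theorem stmt_4_general (R θ₃ a aθ a_x a_t b_x : ℝ) (hR : R ≠ 0) (ha : a ≠ 0) (hax : a_x ≠ 0) :
    LinearMap.ker (plugMatrix R θ₃ a aθ a_x a_t b_x).mulVecLin
      = Submodule.span ℝ {plugKernelVec R θ₃ a aθ a_x a_t b_x} := by
  have hrank : 4 ≤ (plugMatrix R θ₃ a aθ a_x a_t b_x).rank :=
    four_le_rank_plugMatrix hR ha hax θ₃ aθ a_t b_x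
  refine ker_eq_span_singleton_of_finrank_le ?_
    (plugMatrix_mulVec_plugKernelVec hR ha hax θ₃ aθ a_t b_x) (fun h ↦ ?_)
  · simpa [Matrix.rank] using hrank
  · simpa [plugKernelVec] using congrFun h 4

/-- If R ≠ 0, a ≠ 0, a_x ≠ 0, a_t = 0 and b_x = 0, then the kernel of the plug matrix
is exactly the line spanned by the fifth standard basis vector (0,0,0,0,1). -/
theorem stmt_4 (R θ₃ a aθ a_x : ℝ) (hR : R ≠ 0) (ha : a ≠ 0) (hax : a_x ≠ 0) :
    LinearMap.ker (plugMatrix R θ₃ a aθ a_x 0 0).mulVecLin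
      = Submodule.span ℝ {![(0 : ℝ), 0, 0, 0, 1]} := by
  simpa [plugKernelVec] using stmt_4_general R θ₃ a aθ a_x 0 0 hR ha hax
end

section
/- Let E be a real normed vector space and let V : ℝ × E → ℝ × E be a continuous vector field that is locally Lipschitz, written V(t, x) = (V₁(t, x), V₂(t, x)) ∈ ℝ × E, satisfying V₁(−t, x) = V₁(t, x) and V₂(−t, x) = −V₂(t, x) for all (t, x). Let γ = (γ₁, γ₂) : ℝ → ℝ × E be differentiable with γ'(s) = V(γ(s)) for all s ∈ ℝ, and suppose γ₁(s₀) = 0 for some s₀ ∈ ℝ. Then for all s ∈ ℝ, γ₁(s₀ + s) = −γ₁(s₀ − s) and γ₂(s₀ + s) = γ₂(s₀ − s). -/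
/-!
The reflection `R (t, x) = (-t, x)` is linear and carries `-V` to `V`, so `s ↦ R (γ (2 * s₀ - s))`
is again an integral curve of `V`. It meets `γ` at `s₀`, because `γ s₀` lies in the hyperplane
`t = 0` fixed by `R`; by uniqueness the two curves coincide.
-/

open Filter Function Metric Set Topology

section Uniqueness

variable {E : Type*} [NormedAddCommGroup E] [NormedSpace ℝ E] {V : E → E} {γ γ' : ℝ → E}
  {S : Set ℝ} {t₀ : ℝ}

theorem isIntegralCurveAt_eventuallyEq_of_locallyLipschitz (hV : LocallyLipschitz V)
    (hγ : IsIntegralCurveAt γ (fun _ ↦ V) t₀) (hγ' : IsIntegralCurveAt γ' (fun _ ↦ V) t₀)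
    (h : γ t₀ = γ' t₀) : γ =ᶠ[𝓝 t₀] γ' := by
  obtain ⟨K, U, hU, hVU⟩ := hV (γ t₀)
  have hγU : ∀ᶠ t in 𝓝 t₀, γ t ∈ U := hγ.continuousAt.eventually_mem hU
  have hγ'U : ∀ᶠ t in 𝓝 t₀, γ' t ∈ U := hγ'.continuousAt.eventually_mem (h ▸ hU)
  exact ODE_solution_unique_of_eventually (.of_forall fun _ ↦ hVU) (hγ.and hγU) (hγ'.and hγ'U) h

theorem isIntegralCurveOn_eqOn_of_locallyLipschitz (hV : LocallyLipschitz V) (hSo : IsOpen S)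
    (hSc : IsPreconnected S) (hγ : IsIntegralCurveOn γ (fun _ ↦ V) S)
    (hγ' : IsIntegralCurveOn γ' (fun _ ↦ V) S) (ht₀ : t₀ ∈ S) (h : γ t₀ = γ' t₀) :
    EqOn γ γ' S := by
  rw [isIntegralCurveOn_iff_isIntegralCurveAt hSo] at hγ hγ'
  have eventuallyEq_of_eq {t : ℝ} (ht : t ∈ S) (heq : γ t = γ' t) : γ =ᶠ[𝓝 t] γ' :=
    isIntegralCurveAt_eventuallyEq_of_locallyLipschitz hV (hγ t ht) (hγ' t ht) heq
  have subset_agreement : S ⊆ {t | γ =ᶠ[𝓝 t] γ'} := by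
    refine hSc.subset_of_closure_inter_subset isOpen_setOfPred_eventually_nhds
      ⟨t₀, ht₀, eventuallyEq_of_eq ht₀ h⟩ ?_
    rintro t ⟨ht_closure, ht⟩
    have frequently_eq : ∃ᶠ u in 𝓝 t, γ u = γ' u :=
      (mem_closure_iff_frequently.mp ht_closure).mono fun _ hu ↦ hu.eq_of_nhds
    exact eventuallyEq_of_eq ht <| tendsto_nhds_unique_of_frequently_eq
      (hγ t ht).continuousAt (hγ' t ht).continuousAt frequently_eq
  exact fun t ht ↦ (subset_agreement ht).eq_of_nhds

end Uniqueness

section Reversal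

variable {E F : Type*} [NormedAddCommGroup E] [NormedSpace ℝ E] [NormedAddCommGroup F]
  [NormedSpace ℝ F] {γ : ℝ → E} {v : ℝ → E → E} {S : Set ℝ}

theorem isIntegralCurveOn_clm_comp {w : ℝ → F → F} (hγ : IsIntegralCurveOn γ v S) (L : E →L[ℝ] F)
    (hL : ∀ t ∈ S, Semiconj L (v t) (w t)) : IsIntegralCurveOn (L ∘ γ) w S := by
  intro t ht
  rw [comp_apply, ← (hL t ht).eq (γ t)]
  exact L.hasFDerivAt.comp_hasDerivWithinAt t (hγ t ht)

theorem isIntegralCurveOn_comp_const_sub (hγ : IsIntegralCurveOn γ v S) (a : ℝ) :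
    IsIntegralCurveOn (γ ∘ (a - ·)) (fun t ↦ -v (a - t)) ((a - ·) ⁻¹' S) := by
  intro t ht
  simpa using! HasDerivWithinAt.scomp t (hγ (a - t) ht)
    ((hasDerivAt_id t).const_sub a).hasDerivWithinAt fun _ hu ↦ hu

theorem isIntegralCurveOn_ball_apply_add_eq_map_apply_sub {V : E → E} (hV : LocallyLipschitz V)
    {R : E →L[ℝ] E} (hR : Semiconj R (-V) V) {s₀ r : ℝ}
    (hγ : IsIntegralCurveOn γ (fun _ ↦ V) (ball s₀ r)) (hfix : R (γ s₀) = γ s₀)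
    {s : ℝ} (hs : |s| < r) : γ (s₀ + s) = R (γ (s₀ - s)) := by
  have ball_symm : (2 * s₀ - ·) ⁻¹' ball s₀ r = ball s₀ r := by
    ext t
    rw [mem_preimage, mem_ball, mem_ball, dist_comm t, Real.dist_eq, Real.dist_eq]
    ring_nf
  have hγ_rev : IsIntegralCurveOn (R ∘ γ ∘ (2 * s₀ - ·)) (fun _ ↦ V) (ball s₀ r) :=
    isIntegralCurveOn_clm_comp (ball_symm ▸ isIntegralCurveOn_comp_const_sub hγ (2 * s₀)) R
      fun _ _ ↦ hR
  have meet : γ s₀ = (R ∘ γ ∘ (2 * s₀ - ·)) s₀ := by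
    simp only [comp_apply, two_mul, add_sub_cancel_right, hfix]
  have hr : 0 < r := (abs_nonneg s).trans_lt hs
  have agree := isIntegralCurveOn_eqOn_of_locallyLipschitz hV isOpen_ball
    (convex_ball s₀ r).isPreconnected hγ hγ_rev (mem_ball_self hr) meet
  calc γ (s₀ + s) = R (γ (2 * s₀ - (s₀ + s))) := agree (by simpa using hs)
    _ = R (γ (s₀ - s)) := by ring_nf

end Reversal

theorem stmt_12_general {W E : Type*} [NormedAddCommGroup W] [NormedSpace ℝ W]
    [NormedAddCommGroup E] [NormedSpace ℝ E] {V : W × E → W × E} (hV : LocallyLipschitz V)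
    (hV₁ : ∀ w x, (V (-w, x)).1 = (V (w, x)).1) (hV₂ : ∀ w x, (V (-w, x)).2 = -(V (w, x)).2)
    {γ : ℝ → W × E} {s₀ r : ℝ} (hγ : IsIntegralCurveOn γ (fun _ ↦ V) (ball s₀ r))
    (h₀ : (γ s₀).1 = 0) {s : ℝ} (hs : |s| < r) :
    (γ (s₀ + s)).1 = -(γ (s₀ - s)).1 ∧ (γ (s₀ + s)).2 = (γ (s₀ - s)).2 := by
  let R : W × E →L[ℝ] W × E := (-ContinuousLinearMap.id ℝ W).prodMap (.id ℝ E)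
  have hR : Semiconj R (-V) V := fun p ↦
    Prod.ext ((neg_neg _).trans (hV₁ p.1 p.2).symm) (hV₂ p.1 p.2).symm
  have hfix : R (γ s₀) = γ s₀ := Prod.ext (by simp [R, h₀]) rfl
  exact Prod.ext_iff.mp (isIntegralCurveOn_ball_apply_add_eq_map_apply_sub hV hR hγ hfix hs)

/-- If the continuous, locally Lipschitz vector field V on ℝ × E satisfies the
time-reversal symmetry V₁(−t,x) = V₁(t,x), V₂(−t,x) = −V₂(t,x), and the solution γ of
γ' = V(γ) satisfies γ₁(s₀) = 0, then γ₁(s₀+s) = −γ₁(s₀−s) and γ₂(s₀+s) = γ₂(s₀−s). -/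
theorem stmt_12 {E : Type*} [NormedAddCommGroup E] [NormedSpace ℝ E]
    (V : ℝ × E → ℝ × E) (hVc : Continuous V) (hVl : LocallyLipschitz V)
    (hV₁ : ∀ (t : ℝ) (x : E), (V (-t, x)).1 = (V (t, x)).1)
    (hV₂ : ∀ (t : ℝ) (x : E), (V (-t, x)).2 = -(V (t, x)).2)
    (γ : ℝ → ℝ × E) (hγ : ∀ s, HasDerivAt γ (V (γ s)) s)
    (s₀ : ℝ) (h₀ : (γ s₀).1 = 0) :
    ∀ s : ℝ, (γ (s₀ + s)).1 = -(γ (s₀ - s)).1 ∧ (γ (s₀ + s)).2 = (γ (s₀ - s)).2 := by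
  have hγ_curve : IsIntegralCurve γ (fun _ ↦ V) := hγ
  exact fun s ↦ stmt_12_general hVl hV₁ hV₂ (hγ_curve.isIntegralCurveOn _) h₀ (lt_add_one |s|)
end

section
/- Let A : ℝ³ → ℝ and B : ℝ² → ℝ be differentiable functions (with A a function of (θ₃, x, t) and B a function of (x, t)), and let R ∈ ℝ. Define f : ℝ⁵ → ℝ⁶ by f(t, x, θ₁, θ₂, θ₃) = (B(x, t), t, A(θ₃, x, t) − 1, θ₁, θ₂, θ₃), and define the 1-form α on ℝ⁶ (with coordinates (y, t, x, θ₁, θ₂, θ₃)) by α(y, t, x, θ₁, θ₂, θ₃) = y·dt + (1 + x)·(R cos θ₃ · dθ₁ + R sin θ₃ · dθ₂). Then the pullback of α by f equals the 1-form A·(R cos θ₃ · dθ₁ + R sin θ₃ · dθ₂) + B·dt on ℝ⁵; that is, for every point w = (t, x, θ₁, θ₂, θ₃) ∈ ℝ⁵ and every vector v = (v_t, v_x, v_{θ₁}, v_{θ₂}, v_{θ₃}) ∈ ℝ⁵, one has α(f(w))(Df(w)v) = A(θ₃, x, t)·(R cos θ₃ · v_{θ₁} + R sin θ₃ · v_{θ₂})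 + B(x, t)·v_t, where Df(w) is the Fréchet derivative of f at w. -/
/-!
The map `f = (b, t, a - 1, θ)` preserves `t` and `θ`, so `f* dt = dt` and `f* η = η`: the
derivatives of `a` and `b` appear only in the `y` and `x` components of `Df`, to which
`y dt + (1 + x) η` is blind. Pulling back therefore amounts to substituting `y = b` and
`x = a - 1` in the coefficients.
-/

section Pullback

open Matrix (vecCons)

variable {𝕜 : Type*} [NontriviallyNormedField 𝕜] {n : ℕ}

theorem hasFDerivAt_vecCons {E F : Type*} [NormedAddCommGroup E] [NormedSpace 𝕜 E]
    [NormedAddCommGroup F] [NormedSpace 𝕜 F] {φ : E → F} {φ' : E →L[𝕜] F} {φs : E → Fin n → F}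
    {φs' : E →L[𝕜] (Fin n → F)} {x : E} (hφ : HasFDerivAt φ φ' x) (hφs : HasFDerivAt φs φs' x) :
    HasFDerivAt (fun z => vecCons (φ z) (φs z))
      (ContinuousLinearMap.finCons (M := fun _ => F) φ' φs') x :=
  HasFDerivAt.finCons (F' := fun _ => F) hφ hφs

/-- The projection `(z₀, …, zₖ₋₁, θ) ↦ θ` onto the angular coordinates, which are always listed
last. -/
def angleProj (𝕜 : Type*) [NontriviallyNormedField 𝕜] (n k : ℕ) :
    (Fin (n + k) → 𝕜) →L[𝕜] (Fin n → 𝕜) :=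
  ContinuousLinearMap.pi fun i => ContinuousLinearMap.proj (i.addNat k)

/-- The map `(t, x, θ) ↦ (b, t, a - 1, θ)`, for functions `a`, `b` of all of the coordinates
`(t, x, θ)`. -/
def plugMap (a b : (Fin (n + 2) → 𝕜) → 𝕜) (w : Fin (n + 2) → 𝕜) : Fin (n + 3) → 𝕜 :=
  vecCons (b w) (vecCons (w 0) (vecCons (a w - 1) (angleProj 𝕜 n 2 w)))

/-- The 1-form `y dt + (1 + x) η` in the coordinates `(y, t, x, θ)`, for a 1-form `η` in the
angles `θ`. For `η = angularForm R` its differential is the symplectic form of `ℝ⁶`. -/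
def ambientForm (η : (Fin n → 𝕜) → (Fin n → 𝕜) →L[𝕜] 𝕜) (p : Fin (n + 3) → 𝕜) :
    (Fin (n + 3) → 𝕜) →L[𝕜] 𝕜 :=
  p 0 • ContinuousLinearMap.proj 1 + (1 + p 2) • (η (angleProj 𝕜 n 3 p)).comp (angleProj 𝕜 n 3)

/-- The 1-form `a η + b dt` in the coordinates `(t, x, θ)`. For `η = angularForm R` its
differential is the plug form `ω`. -/
def plugForm (η : (Fin n → 𝕜) → (Fin n → 𝕜) →L[𝕜] 𝕜) (a b : (Fin (n + 2) → 𝕜) → 𝕜)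
    (w : Fin (n + 2) → 𝕜) : (Fin (n + 2) → 𝕜) →L[𝕜] 𝕜 :=
  a w • (η (angleProj 𝕜 n 2 w)).comp (angleProj 𝕜 n 2) + b w • ContinuousLinearMap.proj 0

variable {a b : (Fin (n + 2) → 𝕜) → 𝕜} {w : Fin (n + 2) → 𝕜}

theorem ambientForm_vecCons (η : (Fin n → 𝕜) → (Fin n → 𝕜) →L[𝕜] 𝕜) (y t x y' t' x' : 𝕜)
    (θ θ' : Fin n → 𝕜) :
    ambientForm η (vecCons y (vecCons t (vecCons x θ)))
        (vecCons y' (vecCons t' (vecCons x' θ'))) =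
      y * t' + (1 + x) * η θ θ' :=
  rfl

theorem fderiv_plugMap_apply (ha : DifferentiableAt 𝕜 a w) (hb : DifferentiableAt 𝕜 b w)
    (v : Fin (n + 2) → 𝕜) :
    fderiv 𝕜 (plugMap a b) w v =
      vecCons (fderiv 𝕜 b w v)
        (vecCons (v 0) (vecCons (fderiv 𝕜 a w v) (angleProj 𝕜 n 2 v))) := by
  have hasFDerivAt_plugMap := hasFDerivAt_vecCons hb.hasFDerivAt <|
    hasFDerivAt_vecCons (hasFDerivAt_apply 0 w) <|
      hasFDerivAt_vecCons (ha.hasFDerivAt.sub_const 1) (angleProj 𝕜 n 2).hasFDerivAt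
  exact DFunLike.congr_fun hasFDerivAt_plugMap.fderiv v

theorem stmt_15_general (η : (Fin n → 𝕜) → (Fin n → 𝕜) →L[𝕜] 𝕜)
    (ha : DifferentiableAt 𝕜 a w) (hb : DifferentiableAt 𝕜 b w) :
    (ambientForm η (plugMap a b w)).comp (fderiv 𝕜 (plugMap a b) w) = plugForm η a b w := by
  ext1 v
  calc
    ambientForm η (plugMap a b w) (fderiv 𝕜 (plugMap a b) w v)
      = b w * v 0 + (1 + (a w - 1)) * η (angleProj 𝕜 n 2 w) (angleProj 𝕜 n 2 v) := by
        rw [fderiv_plugMap_apply ha hb, plugMap, ambientForm_vecCons]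
    _ = a w * η (angleProj 𝕜 n 2 w) (angleProj 𝕜 n 2 v) + b w * v 0 := by ring

end Pullback

/-- The 1-form `η = R cos θ₃ dθ₁ + R sin θ₃ dθ₂`, where `θ₁, θ₂, θ₃` have indices `0, 1, 2`. -/
noncomputable def angularForm (R : ℝ) (θ : Fin 3 → ℝ) : (Fin 3 → ℝ) →L[ℝ] ℝ :=
  (R * Real.cos (θ 2)) • ContinuousLinearMap.proj 0 +
    (R * Real.sin (θ 2)) • ContinuousLinearMap.proj 1

/-- The pullback computation f*(y dt + (1+x)η) = Aη + B dt from the paper, where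
η = R cos θ₃ dθ₁ + R sin θ₃ dθ₂. Coordinates on ℝ⁵ are (t, x, θ₁, θ₂, θ₃) (indices
0,…,4) and on ℝ⁶ are (y, t, x, θ₁, θ₂, θ₃) (indices 0,…,5); the map f is
(t, x, θ₁, θ₂, θ₃) ↦ (B(x,t), t, A(θ₃,x,t) − 1, θ₁, θ₂, θ₃). -/
theorem stmt_15 (R : ℝ) (A : ℝ × ℝ × ℝ → ℝ) (B : ℝ × ℝ → ℝ)
    (hA : Differentiable ℝ A) (hB : Differentiable ℝ B)
    (f : (Fin 5 → ℝ) → (Fin 6 → ℝ))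
    (hf : ∀ w : Fin 5 → ℝ,
      f w = ![B (w 1, w 0), w 0, A (w 4, w 1, w 0) - 1, w 2, w 3, w 4])
    (α : (Fin 6 → ℝ) → (Fin 6 → ℝ) → ℝ)
    (hα : ∀ p u : Fin 6 → ℝ,
      α p u = p 0 * u 1 + (1 + p 2) * (R * Real.cos (p 5) * u 3 + R * Real.sin (p 5) * u 4)) :
    ∀ w v : Fin 5 → ℝ,
      α (f w) (fderiv ℝ f w v) =
        A (w 4, w 1, w 0) * (R * Real.cos (w 4) * v 2 + R * Real.sin (w 4) * v 3)
          + B (w 1, w 0) * v 0 := by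
  intro w v
  let a : (Fin 5 → ℝ) → ℝ := fun w => A (w 4, w 1, w 0)
  let b : (Fin 5 → ℝ) → ℝ := fun w => B (w 1, w 0)
  have ha : Differentiable ℝ a := hA.fun_comp (by fun_prop)
  have hb : Differentiable ℝ b := hB.fun_comp (by fun_prop)
  have f_eq : f = plugMap (n := 3) a b := by
    ext w i
    rw [hf]
    fin_cases i <;> rfl
  have α_eq (p u : Fin 6 → ℝ) : α p u = ambientForm (angularForm R) p u := hα p u
  rw [α_eq, f_eq]
  exact DFunLike.congr_fun (stmt_15_general (angularForm R) (ha w) (hb w)) v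
end

section
/- Let R ≠ 0 be real, and let a, aθ, ax, at, bx, x be real numbers such that a > 0, 1 + x > 0, ax ≥ 0, and either ax² + at² > 0 or bx ≠ 0. For each τ ∈ [0, 1] set a(τ) = (1 − τ)·a + τ·(1 + x), ax(τ) = (1 − τ)·ax + τ, at(τ) = (1 − τ)·at, aθ(τ) = (1 − τ)·aθ, and bx(τ) = (1 − τ)·bx. Then for every τ ∈ [0, 1], R⁴·a(τ)²·(ax(τ)² + at(τ)²) + R²·bx(τ)²·(a(τ)² + aθ(τ)²) > 0. -/
/-!
Where `R` and `A` are nonzero, the coefficient is a sum of two nonnegative terms that vanish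
together only if `∂A/∂x`, `∂A/∂t` and `∂B/∂x` all do. At `τ = 0` this is excluded by assumption;
for `τ > 0` the interpolated `∂A/∂x` is positive, because it is nonnegative at the plug end and
positive at the boundary end.
-/

section

variable {𝕜 : Type*} [CommRing 𝕜]

/-- The coefficient of the linear term of the characteristic polynomial of the coordinate matrix of
the two-form `d(A η + B dt)`, as a function of the values at a point of `A`, its derivatives along
`θ₃`, `x`, `t`, and the derivative of `B` along `x`. For `𝕜 = ℝ` it is nonzero exactly when the
kernel of the two-form is one-dimensional. -/
def linearCharCoeff (R A A_θ A_x A_t B_x : 𝕜) : 𝕜 :=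
  R ^ 4 * A ^ 2 * (A_x ^ 2 + A_t ^ 2) + R ^ 2 * B_x ^ 2 * (A ^ 2 + A_θ ^ 2)

variable [LinearOrder 𝕜] [IsStrictOrderedRing 𝕜]

theorem linearCharCoeff_pos_iff {R A A_θ A_x A_t B_x : 𝕜} (hR : R ≠ 0) (hA : A ≠ 0) :
    0 < linearCharCoeff R A A_θ A_x A_t B_x ↔ 0 < A_x ^ 2 + A_t ^ 2 ∨ B_x ≠ 0 := by
  unfold linearCharCoeff
  constructor
  · contrapose!
    rintro ⟨hA_xt, rfl⟩
    have : R ^ 4 * A ^ 2 * (A_x ^ 2 + A_t ^ 2) ≤ 0 :=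
      mul_nonpos_of_nonneg_of_nonpos (by positivity) hA_xt
    simpa using this
  · rintro (hA_xt | hB_x) <;> positivity

theorem stmt_16_general {R A₀ A₁ A_θ₀ A_θ₁ A_x₀ A_x₁ A_t₀ A_t₁ B_x₀ B_x₁ : 𝕜} (hR : R ≠ 0)
    (hA₀ : 0 < A₀) (hA₁ : 0 < A₁) (hA_x₀ : 0 ≤ A_x₀) (hA_x₁ : 0 < A_x₁)
    (h₀ : 0 < A_x₀ ^ 2 + A_t₀ ^ 2 ∨ B_x₀ ≠ 0) :
    ∀ τ ∈ Set.Icc (0 : 𝕜) 1,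
      0 < linearCharCoeff R ((1 - τ) * A₀ + τ * A₁) ((1 - τ) * A_θ₀ + τ * A_θ₁)
        ((1 - τ) * A_x₀ + τ * A_x₁) ((1 - τ) * A_t₀ + τ * A_t₁) ((1 - τ) * B_x₀ + τ * B_x₁) := by
  rintro τ ⟨hτ₀, hτ₁⟩
  have hA : 0 < (1 - τ) * A₀ + τ * A₁ :=
    convex_Ioi (0 : 𝕜) hA₀ hA₁ (sub_nonneg.2 hτ₁) hτ₀ (sub_add_cancel 1 τ)
  rw [linearCharCoeff_pos_iff hR hA.ne']
  rcases hτ₀.eq_or_lt with rfl | hτ_pos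
  · simpa using h₀
  · have hA_x : 0 < (1 - τ) * A_x₀ + τ * A_x₁ :=
      add_pos_of_nonneg_of_pos (mul_nonneg (sub_nonneg.2 hτ₁) hA_x₀) (mul_pos hτ_pos hA_x₁)
    exact .inl (add_pos_of_pos_of_nonneg (pow_pos hA_x 2) (sq_nonneg _))

end

/-- Pointwise content of Remark 3.3: along the linear interpolation between the plug
data (A, B) and the boundary data (1 + x, 0), the coefficient of the linear term of the
characteristic polynomial of the coordinate matrix of ω_τ stays positive. -/
theorem stmt_16 (R θ₃ a aθ a_x a_t b_x x : ℝ) (hR : R ≠ 0) (ha : 0 < a)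
    (hx : 0 < 1 + x) (hax : 0 ≤ a_x) (h : 0 < a_x ^ 2 + a_t ^ 2 ∨ b_x ≠ 0) :
    ∀ τ ∈ Set.Icc (0 : ℝ) 1,
      0 < R ^ 4 * ((1 - τ) * a + τ * (1 + x)) ^ 2
            * (((1 - τ) * a_x + τ) ^ 2 + ((1 - τ) * a_t) ^ 2)
          + R ^ 2 * ((1 - τ) * b_x) ^ 2
            * (((1 - τ) * a + τ * (1 + x)) ^ 2 + ((1 - τ) * aθ) ^ 2) := by
  simpa only [linearCharCoeff, mul_one, mul_zero, add_zero] using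
    stmt_16_general (A_θ₀ := aθ) (A_θ₁ := 0) (A_t₁ := 0) (B_x₁ := 0) hR ha hx hax one_pos h
end
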